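/- Let Ω ⊆ ℝ³ be open and connected, let φ : Ω → ℝ³ be a smooth diffeomorphism onto the open set U = φ(Ω) with invertible derivative Dφ(X) at every X, and let G : Ω → ℝ^{3×3} be a smooth field of symmetric positive-definite matrices (the material metric induced by a distribution of eigenstrains). Define on U the fields b(φ(X)) = Dφ(X) G(X)⁻¹ Dφ(X)ᵀ, c = b⁻¹, and the invariants I₁ = tr b, I₂ = ((tr b)² − tr(b²))/2, I₃ = det b. Suppose that for every choice of smooth response functions α, β, γ : ℝ³ → ℝ the Cauchy stress field σ(x) = α·Id + β·b + γ·c, with α, β, γ evaluated at (I₁(x), I₂(x), I₃(x)), satisfies div σ = 0 on U. Then I₁, I₂, I₃ are constant on U and div b = 0 and div c = 0 on U. -/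

import Mathlib

open Matrix

/-- The Jacobian matrix (derivative) of a map `ℝ³ → ℝ³` at a point. -/
noncomputable def jac (φ : (Fin 3 → ℝ) → (Fin 3 → ℝ)) (x : Fin 3 → ℝ) :
    Matrix (Fin 3) (Fin 3) ℝ :=
  fun i j => fderiv ℝ φ x (Pi.single j 1) i

/-- Divergence of a matrix field: `(div T)_i = Σ_j ∂T_{ij}/∂x_j`. -/
noncomputable def mdiv (T : (Fin 3 → ℝ) → Matrix (Fin 3) (Fin 3) ℝ) (x : Fin 3 → ℝ) :
    Fin 3 → ℝ :=
  fun i => ∑ j, fderiv ℝ (fun y => T y i j) x (Pi.single j 1)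

/-- The three principal invariants `(I₁, I₂, I₃)` of a `3×3` matrix. -/
noncomputable def principalInvariants (b : Matrix (Fin 3) (Fin 3) ℝ) : Fin 3 → ℝ :=
  ![b.trace, (b.trace ^ 2 - (b * b).trace) / 2, b.det]

/-- Entrywise differentiable matrix fields have differentiable determinant. -/
lemma aux_det {M : (Fin 3 → ℝ) → Matrix (Fin 3) (Fin 3) ℝ} {x : Fin 3 → ℝ}
    (h : ∀ i j, DifferentiableAt ℝ (fun y => M y i j) x) :
    DifferentiableAt ℝ (fun y => (M y).det) x := by
  simp only [det_fin_three]
  fun_prop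

lemma aux_mul {M N : (Fin 3 → ℝ) → Matrix (Fin 3) (Fin 3) ℝ} {x : Fin 3 → ℝ}
    (h : ∀ i j, DifferentiableAt ℝ (fun y => M y i j) x)
    (h' : ∀ i j, DifferentiableAt ℝ (fun y => N y i j) x) (i j : Fin 3) :
    DifferentiableAt ℝ (fun y => (M y * N y) i j) x := by
  simp only [Matrix.mul_apply, Fin.sum_univ_three]
  fun_prop

lemma aux_inv {M : (Fin 3 → ℝ) → Matrix (Fin 3) (Fin 3) ℝ} {x : Fin 3 → ℝ}
    (h : ∀ i j, DifferentiableAt ℝ (fun y => M y i j) x) (hd : (M x).det ≠ 0) (i j : Fin 3) :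
    DifferentiableAt ℝ (fun y => (M y)⁻¹ i j) x := by
  simp only [Matrix.inv_def, Ring.inverse_eq_inv', Matrix.smul_apply, smul_eq_mul]
  refine ((aux_det h).inv hd).mul ?_
  simp only [Matrix.adjugate_apply]
  refine aux_det fun k l => ?_
  by_cases hk : k = j
  · simp [Matrix.updateRow_apply, hk]
  · simpa [Matrix.updateRow_apply, hk] using h k l

lemma aux_pi {M : (Fin 3 → ℝ) → Matrix (Fin 3) (Fin 3) ℝ} {x : Fin 3 → ℝ}
    (h : ∀ i j, DifferentiableAt ℝ (fun y => M y i j) x) (k : Fin 3) :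
    DifferentiableAt ℝ (fun y => principalInvariants (M y) k) x := by
  have hdet := aux_det h
  have hm := aux_mul h h
  have ht : DifferentiableAt ℝ (fun y => (M y).trace) x := by
    simp only [Matrix.trace_fin_three]; fun_prop
  have ht2 : DifferentiableAt ℝ (fun y => (M y * M y).trace) x := by
    simp only [Matrix.trace_fin_three]
    exact ((hm 0 0).add (hm 1 1)).add (hm 2 2)
  fin_cases k
  · simpa [principalInvariants] using ht
  · have : DifferentiableAt ℝ
        (fun y => ((M y).trace ^ 2 - (M y * M y).trace) / 2) x := by fun_prop
    simpa [principalInvariants] using this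
  · simpa [principalInvariants] using hdet

/-- universality conditions in compressible isotropic Cauchy
anelasticity. If for every choice of smooth response functions `α, β, γ` the Cauchy
stress `σ = α·Id + β·b + γ·c` is divergence-free on `U = φ(Ω)`, where
`b(φ(X)) = Dφ(X) G(X)⁻¹ Dφ(X)ᵀ` and `c = b⁻¹`, then the principal invariants of `b` are
constant on `U`, and `div b = div c = 0` on `U`. -/
theorem anelastic_universality_conditions
    (Ω U : Set (Fin 3 → ℝ)) (hΩopen : IsOpen Ω) (hΩconn : IsConnected Ω)
    (φ : (Fin 3 → ℝ) → (Fin 3 → ℝ)) (hφ : ContDiffOn ℝ (⊤ : ℕ∞) φ Ω)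
    (hφinj : Set.InjOn φ Ω)
    (hφdet : ∀ X ∈ Ω, (jac φ X).det ≠ 0)
    (hU : U = φ '' Ω) (hUopen : IsOpen U)
    (G : (Fin 3 → ℝ) → Matrix (Fin 3) (Fin 3) ℝ)
    (hGsmooth : ∀ i j, ContDiffOn ℝ (⊤ : ℕ∞) (fun X => G X i j) Ω)
    (hGsym : ∀ X ∈ Ω, (G X)ᵀ = G X)
    (hGpd : ∀ X ∈ Ω, (G X).PosDef)
    (b : (Fin 3 → ℝ) → Matrix (Fin 3) (Fin 3) ℝ)
    (hb : ∀ X ∈ Ω, b (φ X) = jac φ X * (G X)⁻¹ * (jac φ X)ᵀ)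
    (huniv : ∀ α β γ : (Fin 3 → ℝ) → ℝ,
      ContDiff ℝ (⊤ : ℕ∞) α → ContDiff ℝ (⊤ : ℕ∞) β → ContDiff ℝ (⊤ : ℕ∞) γ →
      ∀ x ∈ U, mdiv (fun y =>
        α (principalInvariants (b y)) • (1 : Matrix (Fin 3) (Fin 3) ℝ)
          + β (principalInvariants (b y)) • b y
          + γ (principalInvariants (b y)) • (b y)⁻¹) x = 0) :
    (∀ x ∈ U, ∀ y ∈ U, principalInvariants (b x) = principalInvariants (b y))
      ∧ (∀ x ∈ U, mdiv b x = 0 ∧ mdiv (fun y => (b y)⁻¹) x = 0) := by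
  have hb1 : ∀ x ∈ U, mdiv b x = 0 := by
    intro x hx
    have := huniv (fun _ => 0) (fun _ => 1) (fun _ => 0) contDiff_const contDiff_const
      contDiff_const x hx
    simpa using this
  have hc1 : ∀ x ∈ U, mdiv (fun y => (b y)⁻¹) x = 0 := by
    intro x hx
    have := huniv (fun _ => 0) (fun _ => 0) (fun _ => 1) contDiff_const contDiff_const
      contDiff_const x hx
    simpa using this
  refine ⟨?_, fun x hx => ⟨hb1 x hx, hc1 x hx⟩⟩
  have hUc : IsPreconnected U := by
    rw [hU]
    exact hΩconn.isPreconnected.image φ hφ.continuousOn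
  -- entries of `b` are differentiable
  have hbd : ∀ x ∈ U, ∀ i j, DifferentiableAt ℝ (fun y => b y i j) x := by
    intro x hx i j
    rw [hU] at hx
    obtain ⟨X, hX, rfl⟩ := hx
    have hφX : ContDiffAt ℝ (⊤ : ℕ∞) φ X := hφ.contDiffAt (hΩopen.mem_nhds hX)
    have hjac : ∀ i j, DifferentiableAt ℝ (fun Y => jac φ Y i j) X := by
      intro i j
      have h1 : ContDiffAt ℝ 1 (fderiv ℝ φ) X :=
        hφX.fderiv_right (m := 1) (by
          have h : ((2 : ℕ∞) : WithTop ℕ∞) ≤ ((⊤ : ℕ∞) : WithTop ℕ∞) := WithTop.coe_le_coe.2 le_top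
          have e : (1 + 1 : WithTop ℕ∞) = ((2 : ℕ∞) : WithTop ℕ∞) := by norm_num
          rw [e]; exact h)
      have h2 : DifferentiableAt ℝ (fderiv ℝ φ) X := h1.differentiableAt (by norm_num)
      have h3 : DifferentiableAt ℝ (fun Y => fderiv ℝ φ Y (Pi.single j 1)) X :=
        h2.clm_apply (differentiableAt_const _)
      exact (differentiableAt_pi.1 h3) i
    have hG : ∀ i j, DifferentiableAt ℝ (fun Y => G Y i j) X := fun i j =>
      ((hGsmooth i j).contDiffAt (hΩopen.mem_nhds hX)).differentiableAt (by simp)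
    have hGi := aux_inv hG (hGpd X hX).det_pos.ne'
    have hM := aux_mul (aux_mul hjac hGi) (N := fun Y => (jac φ Y)ᵀ) (fun i j => hjac j i)
    -- the local inverse
    have hJ : (jac φ X) = LinearMap.toMatrix' (fderiv ℝ φ X : (Fin 3 → ℝ) →ₗ[ℝ] (Fin 3 → ℝ)) := by
      ext i j
      simp [jac, LinearMap.toMatrix'_apply]
    have hdet : LinearMap.det (fderiv ℝ φ X : (Fin 3 → ℝ) →ₗ[ℝ] (Fin 3 → ℝ)) ≠ 0 := by
      rw [← LinearMap.det_toMatrix', ← hJ]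
      exact hφdet X hX
    let e := (fderiv ℝ φ X).toContinuousLinearEquivOfDetNeZero hdet
    have he : HasStrictFDerivAt φ (e : (Fin 3 → ℝ) →L[ℝ] (Fin 3 → ℝ)) X := by
      have := hφX.hasStrictFDerivAt (by simp)
      simpa [e] using this
    have hgd := he.to_localInverse.hasFDerivAt.differentiableAt
    have hgX := he.localInverse_apply_image
    have hgr := he.eventually_right_inverse
    have hgΩ : ∀ᶠ y in nhds (φ X), he.localInverse φ e X y ∈ Ω :=
      he.localInverse_continuousAt.eventually
        (by rw [hgX]; exact hΩopen.mem_nhds hX)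
    have hcomp : DifferentiableAt ℝ (fun y => (jac φ (he.localInverse φ e X y) *
        (G (he.localInverse φ e X y))⁻¹ * (jac φ (he.localInverse φ e X y))ᵀ) i j) (φ X) := by
      refine DifferentiableAt.comp (φ X)
        (g := fun Y => (jac φ Y * (G Y)⁻¹ * (jac φ Y)ᵀ) i j) ?_ hgd
      rw [hgX]
      exact hM i j
    refine hcomp.congr_of_eventuallyEq ?_
    filter_upwards [hgr, hgΩ] with y h1 h2
    rw [← hb _ h2, h1]
  have hdI : ∀ k, ∀ x ∈ U, DifferentiableAt ℝ (fun y => principalInvariants (b y) k) x :=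
    fun k x hx => aux_pi (hbd x hx) k
  have hzero : ∀ k, ∀ x ∈ U, fderiv ℝ (fun y => principalInvariants (b y) k) x = 0 := by
    intro k x hx
    have h := huniv (fun v => v k) (fun _ => 0) (fun _ => 0) (contDiff_apply ℝ ℝ k)
      contDiff_const contDiff_const x hx
    have key : ∀ i, fderiv ℝ (fun y => principalInvariants (b y) k) x (Pi.single i 1) = 0 := by
      intro i
      have hi := congrFun h i
      simp only [mdiv, zero_smul, add_zero, Matrix.smul_apply, smul_eq_mul, Pi.zero_apply] at hi
      rw [Finset.sum_eq_single i] at hi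
      · simpa using hi
      · intro j _ hj
        simp [Matrix.one_apply_ne hj.symm]
      · simp
    apply ContinuousLinearMap.coe_injective
    refine LinearMap.pi_ext' fun i => LinearMap.ext_ring ?_
    simpa using key i
  intro x hx y hy
  funext k
  exact hUopen.is_const_of_fderiv_eq_zero hUc
    (fun z hz => (hdI k z hz).differentiableWithinAt) (fun z hz => hzero k z hz) hx hy
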